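/- Let β = i − 1 and D = {0, 1, −1, i, −i}, and for x ∈ ℤ[i], k ∈ ℕ let r(x, k) be the number of normalized (β, D)-representations of x with exactly k nonzero digits. Then for every x ∈ ℤ[i] and every k ∈ ℕ: r(x, k) = r(βx, k) = r(ix, k) = r(x̄, k), where x̄ denotes the complex conjugate of x. -/

import Mathlib

/-!
Each symmetry comes from a weight-preserving bijection between normalized representations.

* `x ↦ β x`: the units are not divisible by `β` (which has norm 2), so every representation
  of `β x` has lowest digit `0`. Hence appending the digit `0` is a bijection, apart from the
  empty string, which has to stay empty in order to remain normalized.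
* `x ↦ i x`: multiply each digit by `i`.
* `x ↦ x̄`: since `β̄ = i β`, conjugating `∑ d_j β ^ j` gives `∑ (i ^ j * d̄_j) β ^ j`, so
  `d_j ↦ i ^ j * d̄_j` works. It is an involution on digit strings.
-/

open Matrix

noncomputable section

/-- The imaginary unit `i` in the Gaussian integers. -/
def gI : GaussianInt := ⟨0, 1⟩

/-- The base `β = i - 1`. -/
def gβ : GaussianInt := ⟨-1, 1⟩

/-- The digit set `D = {0, 1, -1, i, -i}`. -/
def gD : Set GaussianInt := {0, 1, -1, gI, -gI}

/-- Value of a digit string `d_{n-1} ⋯ d_0`, given as a list with the least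
significant digit first: `gval [d_0, d_1, …, d_{n-1}] = Σ d_j β^j`. -/
def gval (l : List GaussianInt) : GaussianInt :=
  l.foldr (fun d acc => d + gβ * acc) 0

/-- `l` (least significant digit first) is a `(β, D)`-representation of `x`. -/
def gIsRep (x : GaussianInt) (l : List GaussianInt) : Prop :=
  (∀ d ∈ l, d ∈ gD) ∧ gval l = x

/-- A representation is normalized if it is empty or its leading digit
(the last entry of the LSD-first list) is nonzero. -/
def gNormalized (l : List GaussianInt) : Prop := l.getLast? ≠ some 0

/-- Number of nonzero digits (Hamming weight). -/
def gweight (l : List GaussianInt) : ℕ := (l.filter (fun d => d ≠ 0)).length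

/-- `gr x k` : number of normalized representations of `x` with exactly `k`
nonzero digits. -/
def gr (x : GaussianInt) (k : ℕ) : ℕ :=
  Nat.card {l : List GaussianInt // gIsRep x l ∧ gNormalized l ∧ gweight l = k}

/-- `l` is one of the strings counted by `gr x k`. -/
def gGood (x : GaussianInt) (k : ℕ) (l : List GaussianInt) : Prop :=
  gIsRep x l ∧ gNormalized l ∧ gweight l = k

theorem gr_congr {x y : GaussianInt} {k : ℕ} (f g : List GaussianInt → List GaussianInt)
    (hf : ∀ l, gGood x k l → gGood y k (f l)) (hg : ∀ l, gGood y k l → gGood x k (g l))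
    (hgf : ∀ l, gGood x k l → g (f l) = l) (hfg : ∀ l, gGood y k l → f (g l) = l) :
    gr x k = gr y k :=
  Nat.card_congr
    { toFun := fun l => ⟨f l.1, hf l.1 l.2⟩
      invFun := fun l => ⟨g l.1, hg l.1 l.2⟩
      left_inv := fun l => Subtype.ext (hgf l.1 l.2)
      right_inv := fun l => Subtype.ext (hfg l.1 l.2) }

theorem gI_mul_gI : gI * gI = -1 := by decide

theorem star_gβ : star gβ = gI * gβ := by decide

theorem gI_mul_eq_zero {d : GaussianInt} : gI * d = 0 ↔ d = 0 := by
  have h : gI ≠ 0 := by decide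
  simp [h]

theorem gI_mul_mem {d : GaussianInt} (h : d ∈ gD) : gI * d ∈ gD := by
  simp only [gD, Set.mem_insert_iff, Set.mem_singleton_iff] at h ⊢
  rcases h with rfl | rfl | rfl | rfl | rfl <;> decide

theorem star_mem {d : GaussianInt} (h : d ∈ gD) : star d ∈ gD := by
  simp only [gD, Set.mem_insert_iff, Set.mem_singleton_iff] at h ⊢
  rcases h with rfl | rfl | rfl | rfl | rfl <;> decide

@[simp] theorem gval_nil : gval [] = 0 := rfl

@[simp] theorem gval_cons (d : GaussianInt) (l : List GaussianInt) :
    gval (d :: l) = d + gβ * gval l := rfl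

theorem gweight_cons (d : GaussianInt) (l : List GaussianInt) :
    gweight (d :: l) = (if d = 0 then 0 else 1) + gweight l := by
  by_cases h : d = 0 <;> simp [gweight, h, add_comm]

theorem gNormalized_cons {d : GaussianInt} {l : List GaussianInt} (h : l ≠ []) :
    gNormalized (d :: l) ↔ gNormalized l := by
  cases l with
  | nil => exact absurd rfl h
  | cons e l => simp [gNormalized, List.getLast?_cons_cons]

theorem gNormalized_singleton {d : GaussianInt} : gNormalized [d] ↔ d ≠ 0 := by
  simp [gNormalized]

/-! ### Multiplication by `i` -/

/-- Multiply every digit by `i`. -/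
def gRot (l : List GaussianInt) : List GaussianInt := l.map (gI * ·)

theorem gval_gRot (l : List GaussianInt) : gval (gRot l) = gI * gval l := by
  induction l with
  | nil => simp [gRot]
  | cons d l ih =>
    simp only [gRot, List.map_cons, gval_cons] at ih ⊢
    rw [ih]; ring

theorem gweight_gRot (l : List GaussianInt) : gweight (gRot l) = gweight l := by
  induction l with
  | nil => rfl
  | cons d l ih =>
    simp only [gRot, List.map_cons, gweight_cons, gI_mul_eq_zero] at ih ⊢
    rw [ih]

theorem gNormalized_gRot (l : List GaussianInt) : gNormalized (gRot l) ↔ gNormalized l := by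
  have h : gI ≠ 0 := by decide
  simp only [gNormalized, gRot, List.getLast?_map]
  cases l.getLast? <;> simp [h]

theorem gRot_mem {l : List GaussianInt} (h : ∀ d ∈ l, d ∈ gD) : ∀ d ∈ gRot l, d ∈ gD := by
  intro d hd
  obtain ⟨e, he, rfl⟩ := List.mem_map.1 hd
  exact gI_mul_mem (h e he)

theorem gGood_gRot {x : GaussianInt} {k : ℕ} {l : List GaussianInt} (h : gGood x k l) :
    gGood (gI * x) k (gRot l) :=
  ⟨⟨gRot_mem h.1.1, by rw [gval_gRot, h.1.2]⟩, (gNormalized_gRot l).2 h.2.1,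
    by rw [gweight_gRot, h.2.2]⟩

theorem gI_pow_four_mul (d : GaussianInt) : gI * (gI * (gI * (gI * d))) = d := by
  linear_combination (gI * gI - 1) * d * gI_mul_gI

theorem gRot_four (l : List GaussianInt) : gRot (gRot (gRot (gRot l))) = l := by
  induction l with
  | nil => rfl
  | cons d l ih =>
    simp only [gRot, List.map_cons, gI_pow_four_mul] at ih ⊢
    rw [ih]

/-! ### Complex conjugation -/

/-- The digit transformation `d_j ↦ i ^ j * d̄_j`, which conjugates the value of a string. -/
def gConj : List GaussianInt → List GaussianInt
  | [] => []
  | d :: l => star d :: gRot (gConj l)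

theorem gval_gConj (l : List GaussianInt) : gval (gConj l) = star (gval l) := by
  induction l with
  | nil => simp [gConj]
  | cons d l ih =>
    simp only [gConj, gval_cons, gval_gRot, ih, star_add, star_mul', star_gβ]
    ring

theorem gweight_gConj (l : List GaussianInt) : gweight (gConj l) = gweight l := by
  induction l with
  | nil => rfl
  | cons d l ih => simp only [gConj, gweight_cons, gweight_gRot, ih, star_eq_zero]

theorem gNormalized_gConj (l : List GaussianInt) : gNormalized (gConj l) ↔ gNormalized l := by
  induction l with
  | nil => rfl
  | cons d l ih =>
    cases l with
    | nil =>
      change gNormalized [star d] ↔ _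
      simp only [gNormalized_singleton, ne_eq, star_eq_zero]
    | cons e l =>
      rw [gConj, gNormalized_cons (by simp [gConj, gRot]), gNormalized_gRot, ih,
        gNormalized_cons (l := e :: l) (by simp)]

theorem gConj_mem {l : List GaussianInt} (h : ∀ d ∈ l, d ∈ gD) : ∀ d ∈ gConj l, d ∈ gD := by
  induction l with
  | nil => exact h
  | cons d l ih =>
    rw [List.forall_mem_cons] at h
    rw [gConj, List.forall_mem_cons]
    exact ⟨star_mem h.1, gRot_mem (ih h.2)⟩

theorem gGood_gConj {x : GaussianInt} {k : ℕ} {l : List GaussianInt} (h : gGood x k l) :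
    gGood (star x) k (gConj l) :=
  ⟨⟨gConj_mem h.1.1, by rw [gval_gConj, h.1.2]⟩, (gNormalized_gConj l).2 h.2.1,
    by rw [gweight_gConj, h.2.2]⟩

/-- Conjugation turns multiplication by `i` into multiplication by `-i = i ^ 3`, so the two
occurrences of `gRot` cancel. -/
theorem gRot_gConj_gRot (l : List GaussianInt) : gRot (gConj (gRot l)) = gConj l := by
  induction l with
  | nil => rfl
  | cons d l ih =>
    have h : gI * star (gI * d) = star d := by
      have hs : star gI = -gI := by decide
      rw [star_mul', hs]
      linear_combination (-star d) * gI_mul_gI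
    change gI * star (gI * d) :: gRot (gRot (gConj (gRot l))) = star d :: gRot (gConj l)
    rw [h, ih]

theorem gConj_gConj (l : List GaussianInt) : gConj (gConj l) = l := by
  induction l with
  | nil => rfl
  | cons d l ih => rw [gConj, gConj, gRot_gConj_gRot, ih, star_star]

/-! ### Multiplication by `β` -/

/-- Append a least significant digit `0`, keeping the empty string empty. -/
def gShift : List GaussianInt → List GaussianInt
  | [] => []
  | d :: l => 0 :: d :: l

theorem gGood_gShift {x : GaussianInt} {k : ℕ} {l : List GaussianInt} (h : gGood x k l) :
    gGood (gβ * x) k (gShift l) := by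
  obtain ⟨⟨hD, rfl⟩, hn, hw⟩ := h
  cases l with
  | nil => exact ⟨⟨hD, by simp [gShift]⟩, hn, hw⟩
  | cons d l =>
    refine ⟨⟨List.forall_mem_cons.2 ⟨by simp [gD], hD⟩, by simp [gShift]⟩, ?_, ?_⟩
    · exact (gNormalized_cons (by simp)).2 hn
    · rw [gShift, gweight_cons, hw]; simp

/-- No unit is divisible by `β`: the coordinates of a multiple of `β` have even sum. -/
theorem digit_eq_zero {d y x : GaussianInt} (hd : d ∈ gD) (h : d + gβ * y = gβ * x) :
    d = 0 := by
  have h1 := congrArg Zsqrtd.re h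
  have h2 := congrArg Zsqrtd.im h
  simp only [Zsqrtd.re_add, Zsqrtd.im_add, Zsqrtd.re_mul, Zsqrtd.im_mul, gβ] at h1 h2
  simp only [gD, Set.mem_insert_iff, Set.mem_singleton_iff] at hd
  rcases hd with rfl | rfl | rfl | rfl | rfl
  · rfl
  all_goals
    exfalso
    simp [gI] at h1 h2
    omega

theorem gGood_gβ_cons {x d : GaussianInt} {k : ℕ} {l : List GaussianInt}
    (h : gGood (gβ * x) k (d :: l)) : d = 0 ∧ l ≠ [] ∧ gGood x k l := by
  obtain ⟨⟨hD, hv⟩, hn, hw⟩ := h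
  rw [List.forall_mem_cons] at hD
  obtain rfl := digit_eq_zero hD.1 hv
  have hl : l ≠ [] := by
    rintro rfl
    exact gNormalized_singleton.1 hn rfl
  have hβ : gβ ≠ 0 := by decide
  refine ⟨rfl, hl, ⟨hD.2, mul_left_cancel₀ hβ ?_⟩, (gNormalized_cons hl).1 hn, ?_⟩
  · rw [← hv, gval_cons, zero_add]
  · rw [← hw, gweight_cons]; simp

theorem gGood_tail {x : GaussianInt} {k : ℕ} {l : List GaussianInt}
    (h : gGood (gβ * x) k l) : gGood x k l.tail := by
  cases l with
  | nil =>
    have hβ : gβ ≠ 0 := by decide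
    refine ⟨⟨h.1.1, mul_left_cancel₀ hβ ?_⟩, h.2⟩
    rw [← h.1.2]; simp
  | cons d l => exact (gGood_gβ_cons h).2.2

theorem gShift_tail {x : GaussianInt} {k : ℕ} {l : List GaussianInt}
    (h : gGood (gβ * x) k l) : gShift l.tail = l := by
  cases l with
  | nil => rfl
  | cons d l =>
    obtain ⟨rfl, hl, -⟩ := gGood_gβ_cons h
    cases l with
    | nil => exact absurd rfl hl
    | cons e l => rfl

/-- Symmetries of the counting function `r(x, k)`. -/
theorem stmt3 (x : GaussianInt) (k : ℕ) :
    gr x k = gr (gβ * x) k ∧ gr x k = gr (gI * x) k ∧ gr x k = gr (star x) k := by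
  refine ⟨?_, ?_, ?_⟩
  · refine gr_congr gShift List.tail (fun _ => gGood_gShift) (fun _ => gGood_tail) ?_
      (fun _ => gShift_tail)
    rintro (_ | ⟨d, l⟩) - <;> rfl
  · refine gr_congr gRot (fun l => gRot (gRot (gRot l))) (fun _ => gGood_gRot) ?_
      (fun l _ => gRot_four l) (fun l _ => gRot_four l)
    intro l h
    simpa only [gI_pow_four_mul] using gGood_gRot (gGood_gRot (gGood_gRot h))
  · refine gr_congr gConj gConj (fun _ => gGood_gConj) ?_
      (fun l _ => gConj_gConj l) (fun l _ => gConj_gConj l)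
    intro l h
    simpa only [star_star] using gGood_gConj h
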